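/- Let Q be a finite quiver, α ≥ 1, 𝔽_q a finite field, R := 𝔽_q[t]/(t^α), r ∈ ℕ^{Q₀}, and let x = (x_a)_{a∈Q₁} be any locally free representation of rank r over R. Then #{ y = (y_a)_{a∈Q₁} with y_a ∈ M_{r_{s(a)} × r_{t(a)}}(R) : μ(x,y) = 0 } = q^{−α⟨r,r⟩} · #{ (ξ_i)_{i∈Q₀} with ξ_i ∈ M_{r_i}(R) : ξ_{t(a)} x_a = x_a ξ_{s(a)} for all a ∈ Q₁ } (an equality of positive rational numbers): the number of points in the moment-map fibre over x is q^{−α⟨r,r⟩} times the number of endomorphisms of x. -/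

import Mathlib

/-- A finite quiver (equivalently, a finite multigraph with a chosen orientation of each
edge): finitely many vertices and arrows, with source and target maps. -/
structure FinQuiver where
  V : Type
  E : Type
  [fintypeV : Fintype V]
  [fintypeE : Fintype E]
  [decEqV : DecidableEq V]
  s : E → V
  t : E → V

attribute [instance] FinQuiver.fintypeV FinQuiver.fintypeE FinQuiver.decEqV

namespace FinQuiver

/-- The adjacency (simple) graph of the underlying multigraph: two vertices are adjacent
if some edge joins them.  Connectivity of the multigraph only depends on this graph. -/
def adjGraph (G : FinQuiver) : SimpleGraph G.V :=
  SimpleGraph.fromRel fun a b => ∃ e : G.E, G.s e = a ∧ G.t e = b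

/-- The number of connected components of the underlying multigraph. -/
noncomputable def c (G : FinQuiver) : ℕ :=
  Nat.card G.adjGraph.ConnectedComponent

/-- The Betti number `b(Q) = c(Q) - #Q₀ + #Q₁` of the underlying multigraph. -/
noncomputable def betti (G : FinQuiver) : ℤ :=
  (G.c : ℤ) - Fintype.card G.V + Fintype.card G.E

/-- The underlying multigraph is connected. -/
def Connected (G : FinQuiver) : Prop := G.adjGraph.Connected

/-- Deletion of the edge `e`. -/
noncomputable def deleteEdge (G : FinQuiver) (e : G.E) : FinQuiver :=
  letI : DecidableEq G.E := Classical.decEq _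
  { V := G.V, E := {e' : G.E // e' ≠ e}, s := fun e' => G.s e'.1, t := fun e' => G.t e'.1 }

/-- The underlying multigraph is 2-connected: it is connected and stays connected after
deleting any single edge. -/
def TwoConnected (G : FinQuiver) : Prop :=
  G.Connected ∧ ∀ e : G.E, (G.deleteEdge e).Connected

/-- Restriction `Q|_I` to a subset `I` of the vertices (full sub(multi)graph). -/
noncomputable def restrictV (G : FinQuiver) (I : Set G.V) : FinQuiver :=
  letI : DecidablePred (· ∈ I) := Classical.decPred _
  { V := ↥I
    E := {e : G.E // G.s e ∈ I ∧ G.t e ∈ I}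
    s := fun e => ⟨G.s e.1, e.2.1⟩
    t := fun e => ⟨G.t e.1, e.2.2⟩ }

/-- Restriction `Q|_J` to a subset `J` of the edges (keeping all vertices). -/
noncomputable def restrictE (G : FinQuiver) (J : Set G.E) : FinQuiver :=
  letI : DecidablePred (· ∈ J) := Classical.decPred _
  { V := G.V
    E := ↥J
    s := fun e => G.s e.1
    t := fun e => G.t e.1 }

end FinQuiver

/-- The ring of truncated polynomials `F[t]/(t^α)`. -/
abbrev TruncRing (F : Type) [CommRing F] (α : ℕ) : Type :=
  Polynomial F ⧸ Ideal.span {(Polynomial.X : Polynomial F) ^ α}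

/-- The image of `t` in `F[t]/(t^α)`. -/
noncomputable def tvar (F : Type) [CommRing F] (α : ℕ) : TruncRing F α :=
  Ideal.Quotient.mk _ (Polynomial.X : Polynomial F)
/-- A locally free representation of rank `r` of the quiver `G` over `R`: a matrix
`x_a` of size `r_{t(a)} × r_{s(a)}` for every arrow `a`. -/
abbrev QRep (G : FinQuiver) (R : Type) [CommRing R] (r : G.V → ℕ) : Type :=
  ∀ a : G.E, Matrix (Fin (r (G.t a))) (Fin (r (G.s a))) R

/-- The second component of a pair in the doubled quiver: a matrix `y_a` of size
`r_{s(a)} × r_{t(a)}` for every arrow `a`. -/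
abbrev QCoRep (G : FinQuiver) (R : Type) [CommRing R] (r : G.V → ℕ) : Type :=
  ∀ a : G.E, Matrix (Fin (r (G.s a))) (Fin (r (G.t a))) R

/-- The moment map of the quiver `G`:
`μ(x,y)_i := Σ_{a : t(a)=i} x_a y_a − Σ_{a : s(a)=i} y_a x_a`. -/
noncomputable def momentMap (G : FinQuiver) {R : Type} [CommRing R] {r : G.V → ℕ}
    (x : QRep G R r) (y : QCoRep G R r) (i : G.V) : Matrix (Fin (r i)) (Fin (r i)) R :=
  (∑ a : G.E, if h : G.t a = i then
      cast (congrArg (fun v => Matrix (Fin (r v)) (Fin (r v)) R) h) (x a * y a) else 0)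
  - ∑ a : G.E, if h : G.s a = i then
      cast (congrArg (fun v => Matrix (Fin (r v)) (Fin (r v)) R) h) (y a * x a) else 0

/-- The Euler form `⟨r,r'⟩ := Σ_{i∈Q₀} r_i r'_i − Σ_{a∈Q₁} r_{s(a)} r'_{t(a)}` of `G`. -/
def eulerForm (G : FinQuiver) (r r' : G.V → ℕ) : ℤ :=
  ∑ i : G.V, (r i : ℤ) * (r' i : ℤ) - ∑ a : G.E, (r (G.s a) : ℤ) * (r' (G.t a) : ℤ)

/-- The change-of-basis action of `GL_{α,r} = ∏_i GL_{r_i}(R)` on representations: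
`(g·x)_a := g_{t(a)} x_a g_{s(a)}⁻¹`. -/
def glAct (G : FinQuiver) {R : Type} [CommRing R] {r : G.V → ℕ}
    (g : ∀ i : G.V, (Matrix (Fin (r i)) (Fin (r i)) R)ˣ) (x : QRep G R r) : QRep G R r :=
  fun a => (g (G.t a) : Matrix (Fin (r (G.t a))) (Fin (r (G.t a))) R) * x a *
    (((g (G.s a))⁻¹ : (Matrix (Fin (r (G.s a))) (Fin (r (G.s a))) R)ˣ) :
      Matrix (Fin (r (G.s a))) (Fin (r (G.s a))) R)

/-- `A` is block-diagonal for the splittings `m = m' + (m − m')`, `n = n' + (n − n')`: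
all entries `A k l` with `(k < m') ↮ (l < n')` vanish. -/
def IsBlockDiag {R : Type} [CommRing R] {m n : ℕ} (m' n' : ℕ)
    (A : Matrix (Fin m) (Fin n) R) : Prop :=
  ∀ (k : Fin m) (l : Fin n), ¬ ((k : ℕ) < m' ↔ (l : ℕ) < n') → A k l = 0

/-- `r'` is the rank vector of a direct summand of the representation `x`: for some
complementary rank vector `r''` with `r' + r'' = r`, some change of basis `g` makes all
matrices of `x` block-diagonal with diagonal blocks of sizes prescribed by `r'`, `r''`.
(In particular `r' = 0` and `r' = r` always qualify.) -/
def IsSummandRank (G : FinQuiver) {R : Type} [CommRing R] {r : G.V → ℕ}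
    (x : QRep G R r) (r' : G.V → ℕ) : Prop :=
  ∃ r'' : G.V → ℕ, (∀ i, r' i + r'' i = r i) ∧
    ∃ g : ∀ i : G.V, (Matrix (Fin (r i)) (Fin (r i)) R)ˣ,
      ∀ a : G.E, IsBlockDiag (r' (G.t a)) (r' (G.s a)) (glAct G g x a)

/-- `x` is decomposable: it is a direct sum of two representations of nonzero ranks. -/
def Decomposable (G : FinQuiver) {R : Type} [CommRing R] {r : G.V → ℕ}
    (x : QRep G R r) : Prop :=
  ∃ r' r'' : G.V → ℕ, (∀ i, r' i + r'' i = r i) ∧ r' ≠ 0 ∧ r'' ≠ 0 ∧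
    ∃ g : ∀ i : G.V, (Matrix (Fin (r i)) (Fin (r i)) R)ˣ,
      ∀ a : G.E, IsBlockDiag (r' (G.t a)) (r' (G.s a)) (glAct G g x a)

open Module

/-- The `F`-linear functional on `F[t]/(t^α)` reading off the coefficient of `t^(α-1)`. -/
noncomputable def topCoeff (F : Type) [Field F] (α : ℕ) (hα : 1 ≤ α) :
    TruncRing F α →ₗ[F] F :=
  (Submodule.liftQ ((Ideal.span {(Polynomial.X : Polynomial F) ^ α}).restrictScalars F)
    (Polynomial.lcoeff F (α - 1)) (by
      intro p hp
      rw [Submodule.restrictScalars_mem, Ideal.mem_span_singleton,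
        Polynomial.X_pow_dvd_iff] at hp
      exact hp _ (by omega))) ∘ₗ
    (Submodule.Quotient.restrictScalarsEquiv F
      (Ideal.span {(Polynomial.X : Polynomial F) ^ α})).symm.toLinearMap

theorem topCoeff_mk (F : Type) [Field F] (α : ℕ) (hα : 1 ≤ α) (p : Polynomial F) :
    topCoeff F α hα (Ideal.Quotient.mk _ p) = p.coeff (α - 1) := rfl

theorem eq_zero_of_topCoeff_mul_eq_zero (F : Type) [Field F] (α : ℕ) (hα : 1 ≤ α)
    (a : TruncRing F α) (h : ∀ b, topCoeff F α hα (b * a) = 0) : a = 0 := by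
  obtain ⟨p, rfl⟩ := Ideal.Quotient.mk_surjective a
  rw [Ideal.Quotient.eq_zero_iff_mem, Ideal.mem_span_singleton, Polynomial.X_pow_dvd_iff]
  intro k hk
  have hb := h (Ideal.Quotient.mk _ (Polynomial.X ^ (α - 1 - k)))
  rw [← map_mul, topCoeff_mk, Polynomial.coeff_X_pow_mul', if_pos (by omega)] at hb
  rwa [show α - 1 - (α - 1 - k) = k by omega] at hb

/-- A functional whose associated form `(a, b) ↦ φ (a * b)` is nondegenerate induces a
nondegenerate trace form on families of matrices. -/
theorem eq_zero_of_sum_trace_mul_eq_zero {ι F R : Type} [Fintype ι] [Field F] [CommRing R]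
    [Algebra F R] (φ : R →ₗ[F] F) (hφ : ∀ a, (∀ b, φ (b * a) = 0) → a = 0) {m n : ι → ℕ}
    (y : ∀ i, Matrix (Fin (m i)) (Fin (n i)) R)
    (h : ∀ x : ∀ i, Matrix (Fin (n i)) (Fin (m i)) R,
      ∑ i, φ (Matrix.trace (x i * y i)) = 0) : y = 0 := by
  classical
  funext i
  ext k l
  refine hφ _ fun b => ?_
  have hx := h (Pi.single i (Matrix.single l k b))
  rw [Finset.sum_eq_single i (fun j _ hj => by simp [Pi.single_eq_of_ne hj]) (by simp)] at hx
  rwa [Pi.single_eq_same, Matrix.trace_single_mul] at hx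

/-- The trace pairing between representations of a quiver and of the opposite quiver. -/
noncomputable def tracePairing (G : FinQuiver) {F R : Type} [Field F] [CommRing R]
    [Algebra F R] (φ : R →ₗ[F] F) (r : G.V → ℕ) :
    QCoRep G R r →ₗ[F] Dual F (QRep G R r) :=
  LinearMap.mk₂ F (fun y x => ∑ a, φ (Matrix.trace (x a * y a)))
    (fun y y' x => by simp [Matrix.mul_add, Finset.sum_add_distrib])
    (fun c y x => by simp [Finset.mul_sum])
    (fun y x x' => by simp [Matrix.add_mul, Finset.sum_add_distrib])
    (fun c y x => by simp [Finset.mul_sum])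

/-- The infinitesimal action `ξ ↦ (ξ_{t(a)} x_a - x_a ξ_{s(a)})_a` at `x`. -/
noncomputable def infAct (G : FinQuiver) (F : Type) {R : Type} [Field F] [CommRing R]
    [Algebra F R] {r : G.V → ℕ} (x : QRep G R r) :
    (∀ i : G.V, Matrix (Fin (r i)) (Fin (r i)) R) →ₗ[F] QRep G R r where
  toFun ξ a := ξ (G.t a) * x a - x a * ξ (G.s a)
  map_add' ξ ξ' := by
    funext a
    simp only [Pi.add_apply, Matrix.add_mul, Matrix.mul_add]
    abel
  map_smul' c ξ := by
    funext a
    simp [smul_sub]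

theorem sum_trace_mul_dite_cast {V R : Type} [Fintype V] [DecidableEq V] [CommRing R]
    {r : V → ℕ} (ξ : ∀ i, Matrix (Fin (r i)) (Fin (r i)) R) (v : V)
    (N : Matrix (Fin (r v)) (Fin (r v)) R) :
    ∑ i, Matrix.trace (ξ i * (if h : v = i then
      cast (congrArg (fun v => Matrix (Fin (r v)) (Fin (r v)) R) h) N else 0)) =
      Matrix.trace (ξ v * N) := by
  rw [Finset.sum_eq_single v (fun i _ hi => by simp [hi.symm]) (by simp)]
  simp

/-- The moment map is adjoint to the infinitesimal action. -/
theorem sum_trace_mul_momentMap (G : FinQuiver) {F R : Type} [Field F] [CommRing R]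
    [Algebra F R] (φ : R →ₗ[F] F) {r : G.V → ℕ} (x : QRep G R r) (y : QCoRep G R r)
    (ξ : ∀ i : G.V, Matrix (Fin (r i)) (Fin (r i)) R) :
    ∑ i, φ (Matrix.trace (ξ i * momentMap G x y i)) =
      tracePairing G φ r y (infAct G F x ξ) := by
  have hcyc (a : G.E) : Matrix.trace (ξ (G.s a) * (y a * x a)) =
      Matrix.trace (x a * ξ (G.s a) * y a) := by
    rw [← Matrix.mul_assoc, Matrix.trace_mul_comm, Matrix.mul_assoc]
  simp only [tracePairing, infAct, LinearMap.mk₂_apply, LinearMap.coe_mk, AddHom.coe_mk,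
    ← map_sum, momentMap, Matrix.mul_sub, Matrix.mul_sum, Matrix.trace_sub, Matrix.trace_sum,
    Finset.sum_sub_distrib, Matrix.sub_mul]
  congr 2
  · rw [Finset.sum_comm]
    simp only [sum_trace_mul_dite_cast, Matrix.mul_assoc]
  · rw [Finset.sum_comm]
    simp only [sum_trace_mul_dite_cast, hcyc]

theorem momentMap_eq_zero_iff (G : FinQuiver) {F R : Type} [Field F] [CommRing R]
    [Algebra F R] (φ : R →ₗ[F] F) (hφ : ∀ a, (∀ b, φ (b * a) = 0) → a = 0) {r : G.V → ℕ}
    (x : QRep G R r) (y : QCoRep G R r) :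
    (∀ i, momentMap G x y i = 0) ↔
      tracePairing G φ r y ∈ (LinearMap.range (infAct G F x)).dualAnnihilator := by
  simp only [Submodule.mem_dualAnnihilator, LinearMap.mem_range, forall_exists_index,
    forall_apply_eq_imp_iff, ← sum_trace_mul_momentMap]
  refine ⟨fun h ξ => by simp [h], fun h i => ?_⟩
  exact congrFun (eq_zero_of_sum_trace_mul_eq_zero φ hφ (momentMap G x y) h) i

theorem finrank_matrixFamily {ι F R : Type} [Fintype ι] [Field F] [CommRing R] [Algebra F R]
    [Module.Finite F R] (m n : ι → ℕ) :
    finrank F (∀ i, Matrix (Fin (m i)) (Fin (n i)) R) =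
      finrank F R * ∑ i, m i * n i := by
  rw [finrank_pi_fintype, Finset.mul_sum]
  refine Finset.sum_congr rfl fun i _ => ?_
  rw [finrank_matrix, Fintype.card_fin, Fintype.card_fin]
  ring

theorem tracePairing_injective (G : FinQuiver) {F R : Type} [Field F] [CommRing R]
    [Algebra F R] (φ : R →ₗ[F] F) (hφ : ∀ a, (∀ b, φ (b * a) = 0) → a = 0) (r : G.V → ℕ) :
    Function.Injective (tracePairing G φ r) := by
  rw [injective_iff_map_eq_zero]
  exact fun y hy => eq_zero_of_sum_trace_mul_eq_zero φ hφ y fun x => LinearMap.congr_fun hy x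

/-- Over any finite-dimensional Frobenius algebra, the fibre of the moment map over `x` has
the cardinality of the annihilator of the image of the infinitesimal action at `x`. -/
theorem card_momentFibre (G : FinQuiver) {F R : Type} [Field F] [CommRing R]
    [Algebra F R] [Module.Finite F R] (φ : R →ₗ[F] F)
    (hφ : ∀ a, (∀ b, φ (b * a) = 0) → a = 0) {r : G.V → ℕ} (x : QRep G R r) :
    Nat.card {y : QCoRep G R r // ∀ i, momentMap G x y i = 0} =
      Nat.card (LinearMap.range (infAct G F x)).dualAnnihilator := by
  have hdim : finrank F (QCoRep G R r) = finrank F (Dual F (QRep G R r)) := by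
    rw [Subspace.dual_finrank_eq, finrank_matrixFamily, finrank_matrixFamily]
    simp only [mul_comm]
  exact Nat.card_congr <| Equiv.subtypeEquiv
    (LinearEquiv.ofInjectiveOfFinrankEq _ (tracePairing_injective G φ hφ r) hdim).toEquiv
    (momentMap_eq_zero_iff G φ hφ x)

theorem card_end (G : FinQuiver) (F : Type) {R : Type} [Field F] [CommRing R]
    [Algebra F R] {r : G.V → ℕ} (x : QRep G R r) :
    Nat.card {ξ : ∀ i : G.V, Matrix (Fin (r i)) (Fin (r i)) R //
      ∀ a : G.E, ξ (G.t a) * x a = x a * ξ (G.s a)} =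
      Nat.card (LinearMap.ker (infAct G F x)) :=
  Nat.card_congr <| Equiv.subtypeEquivRight fun ξ => by
    simp [infAct, funext_iff, sub_eq_zero]

/-- Let `Q` be a finite quiver, `α ≥ 1`, `𝔽_q` a finite field,
`R := 𝔽_q[t]/(t^α)`, `r ∈ ℕ^{Q₀}`, and let `x` be any locally free representation of
rank `r` over `R`.  Then the number of `y` with `μ(x,y) = 0` equals `q^{−α⟨r,r⟩}` times
the number of endomorphisms of `x` (an equality of positive rational numbers). -/
theorem momentFibre_card_eq_end_card (G : FinQuiver) (α : ℕ) (hα : 1 ≤ α)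
    (F : Type) [Field F] [Fintype F] (r : G.V → ℕ)
    (x : QRep G (TruncRing F α) r) :
    (Nat.card {y : QCoRep G (TruncRing F α) r // ∀ i : G.V, momentMap G x y i = 0} : ℚ)
      = (Fintype.card F : ℚ) ^ (-(α : ℤ) * eulerForm G r r) *
        (Nat.card {ξ : ∀ i : G.V, Matrix (Fin (r i)) (Fin (r i)) (TruncRing F α) //
            ∀ a : G.E, ξ (G.t a) * x a = x a * ξ (G.s a)} : ℚ) := by
  have hfin : finrank F (TruncRing F α) = α := by
    rw [finrank_quotient_span_eq_natDegree, Polynomial.natDegree_X_pow]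
  have : Module.Finite F (TruncRing F α) := Module.finite_of_finrank_pos (by omega)
  rw [card_momentFibre G (topCoeff F α hα) (eq_zero_of_topCoeff_mul_eq_zero F α hα) x,
    card_end G F x, Module.natCard_eq_pow_finrank (K := F),
    Module.natCard_eq_pow_finrank (K := F) (V := LinearMap.ker _), Nat.card_eq_fintype_card,
    Nat.cast_pow, Nat.cast_pow, ← zpow_natCast, ← zpow_natCast,
    ← zpow_add₀ (Nat.cast_ne_zero.2 Fintype.card_ne_zero)]
  congr 1
  have hann := Subspace.finrank_add_finrank_dualAnnihilator_eq
    (LinearMap.range (infAct G F x))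
  have hrank := LinearMap.finrank_range_add_finrank_ker (infAct G F x)
  rw [finrank_matrixFamily, hfin] at hann hrank
  zify at hann hrank
  simp only [eulerForm, mul_comm (r (G.t _) : ℤ)] at hann ⊢
  linear_combination hann - hrank
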